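/- Let p ≥ 2, let a : {0,1,…,p−1} → ℤ take values in {−1,0,1} with a(0) = 1, and let Θ be the 2p×2p integer matrix Θ = (Γ − I)ω built from a as in the context. Then the polynomial det(I − tΘ) ∈ ℤ[t] equals (1 − (−1)^p t^p)² + 2(1 − (−1)^p t^p)·u_p(t), where u_p(t) = Σ_{k=1}^{p−1} (−1)^k a(k) t^k + (−1)^p t^p. (Equivalently, det(I − tΘ) = (1 − (−1)^p t^p)² (1+t) D(t), where D(t) is the kneading determinant of the p-periodic kneading sequence whose symbols have Φ-values a(0),…,a(p−1).) -/

import Mathlib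

open Polynomial Matrix

/-!
Split the `2p` indices into two halves. With `Γ₀ = α e₀ᵀ`, `αᵢ = a i`, the matrix `1 - tΘ` has
equal diagonal blocks and equal off-diagonal blocks, so its determinant is
`det (1 + tσ) * det (1 + t (1 - 2Γ₀)σ)`. Cycling `σ` to the front turns the second factor into a
modification of the first column of `1 + tσ`. Every such determinant can be read off the row vector
`(1, -t, (-t)², …)`, because that vector annihilates all other columns of `1 + tσ`.
-/

section Determinants

variable {R m : Type*} [CommRing R] [Fintype m] [DecidableEq m]

lemma det_fromBlocks_swap (A B : Matrix m m R) :
    (fromBlocks A B B A).det = (A + B).det * (A - B).det := by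
  have triangularize : fromBlocks 1 1 0 1 * fromBlocks A B B A * fromBlocks 1 (-1) 0 1
      = fromBlocks (A + B) 0 B (A - B) := by
    simp [fromBlocks_multiply, sub_eq_neg_add, add_comm B A]
  simpa using congrArg det triangularize

lemma det_one_sub_smul_fromBlocks_mul (t : R) (G S : Matrix m m R) :
    (1 - t • ((fromBlocks G (-G) (-G) G - 1) * fromBlocks S 0 0 S)).det
      = (1 + t • S).det * (1 + t • ((1 - (2 : R) • G) * S)).det := by
  have blocks : 1 - t • ((fromBlocks G (-G) (-G) G - 1) * fromBlocks S 0 0 S)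
      = fromBlocks (1 - t • ((G - 1) * S)) (t • (G * S)) (t • (G * S)) (1 - t • ((G - 1) * S)) := by
    simp [fromBlocks_multiply, fromBlocks_smul, ← fromBlocks_one, sub_eq_add_neg, fromBlocks_add,
      fromBlocks_neg]
  rw [blocks, det_fromBlocks_swap]
  simp only [Matrix.sub_mul, Matrix.one_mul, smul_mul]
  congr 2 <;> module

lemma det_updateCol_of_vecMul_eq_single {A : Matrix m m R} {w : m → R} {j : m}
    (hw : w ᵥ* A = Pi.single j 1) (c : m → R) :
    (A.updateCol j c).det = A.det * (w ⬝ᵥ c) :=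
  calc (A.updateCol j c).det
      = (w ᵥ* A) ⬝ᵥ A.cramer c := by rw [hw, single_one_dotProduct, cramer_apply]
    _ = w ⬝ᵥ (A *ᵥ A.cramer c) := (dotProduct_mulVec ..).symm
    _ = A.det * (w ⬝ᵥ c) := by rw [mulVec_cramer, dotProduct_smul, smul_eq_mul]

lemma det_add_smul_vecMulVec_single (A : Matrix m m R) (r : R) (c : m → R) (j : m) :
    (A + r • vecMulVec c (Pi.single j 1)).det = A.det + r * (A.updateCol j c).det := by
  have add_eq_updateCol : A + r • vecMulVec c (Pi.single j 1)
      = A.updateCol j ((fun i => A i j) + r • c) := by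
    ext i k
    by_cases h : k = j <;> simp [vecMulVec_apply, h]
  rw [add_eq_updateCol, det_updateCol_add, det_updateCol_smul, updateCol_eq_self]

end Determinants

/-- The `p × p` cyclic permutation matrix `σ`, with ones in the entries `(i, i + 1)` mod `p`. -/
abbrev cyclicShift (R : Type*) [Zero R] [One R] (p : ℕ) : Matrix (Fin p) (Fin p) R :=
  (finRotate p).permMatrix R

section CyclicShift

variable {R : Type*} [CommRing R] {n : ℕ}

lemma finRotate_eq_succ_iff {i : Fin (n + 1)} {j : Fin n} :
    finRotate (n + 1) i = j.succ ↔ i = j.castSucc := by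
  have rotate_castSucc : finRotate (n + 1) j.castSucc = j.succ := by simp
  rw [← rotate_castSucc, EmbeddingLike.apply_eq_iff_eq]

lemma pow_vecMul_one_add_smul_cyclicShift (t : R) :
    (fun i : Fin (n + 1) => (-t) ^ (i : ℕ)) ᵥ* (1 + t • cyclicShift R (n + 1))
      = Pi.single 0 (1 - (-t) ^ (n + 1)) := by
  rw [vecMul_add, vecMul_one, vecMul_smul, vecMul_permMatrix]
  ext j
  refine Fin.cases ?_ (fun j => ?_) j
  · have pred_zero : (finRotate (n + 1)).symm 0 = Fin.last n :=
      (Equiv.symm_apply_eq _).2 finRotate_last.symm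
    simp only [Pi.add_apply, Pi.smul_apply, Function.comp_apply, pred_zero, Pi.single_eq_same,
      Fin.val_zero, Fin.val_last, smul_eq_mul]
    ring
  · have pred_succ : (finRotate (n + 1)).symm j.succ = j.castSucc :=
      (Equiv.symm_apply_eq _).2 (finRotate_eq_succ_iff.2 rfl).symm
    simp only [Pi.add_apply, Pi.smul_apply, Function.comp_apply, pred_succ, smul_eq_mul,
      Fin.val_succ, Fin.val_castSucc, Pi.single_eq_of_ne (Fin.succ_ne_zero j)]
    ring

lemma det_updateCol_single_one_add_smul_cyclicShift (t : R) :
    ((1 + t • cyclicShift R (n + 1)).updateCol 0 (Pi.single 0 1)).det = 1 := by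
  rw [det_of_isUpperTriangular]
  · refine Finset.prod_eq_one fun i _ => ?_
    refine Fin.cases (by simp) (fun i => ?_) i
    have succ_ne : i.succ ≠ i.castSucc := Fin.castSucc_lt_succ.ne'
    simp [PEquiv.toMatrix_apply, finRotate_eq_succ_iff, succ_ne, -finRotate_apply]
  · intro i j (hij : j < i)
    refine Fin.cases (fun hi => ?_) (fun j hj => ?_) j hij
    · simp [hi.ne']
    · have ne_castSucc : i ≠ j.castSucc := (Fin.castSucc_lt_succ.trans hj).ne'
      simp [PEquiv.toMatrix_apply, finRotate_eq_succ_iff, hj.ne', ne_castSucc, -finRotate_apply]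

lemma det_updateCol_one_add_smul_cyclicShift (t : R) (c : Fin (n + 1) → R) :
    ((1 + t • cyclicShift R (n + 1)).updateCol 0 c).det
      = ∑ i : Fin (n + 1), (-t) ^ (i : ℕ) * c i := by
  have pow_vecMul : (fun i : Fin (n + 1) => (-t) ^ (i : ℕ)) ᵥ*
      (1 + t • cyclicShift R (n + 1)).updateCol 0 (Pi.single 0 1) = Pi.single 0 1 := by
    rw [vecMul_updateCol, pow_vecMul_one_add_smul_cyclicShift, dotProduct_single_one, Fin.val_zero,
      pow_zero, Pi.single, Pi.single, Function.update_idem]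
  have det_eq_dotProduct := det_updateCol_of_vecMul_eq_single pow_vecMul c
  rwa [updateCol_idem, det_updateCol_single_one_add_smul_cyclicShift, one_mul] at det_eq_dotProduct

lemma det_one_add_smul_cyclicShift (t : R) :
    (1 + t • cyclicShift R (n + 1)).det = 1 - (-t) ^ (n + 1) :=
  let N := 1 + t • cyclicShift R (n + 1)
  calc N.det
      = (N.updateCol 0 fun i => N i 0).det := by rw [updateCol_eq_self]
    _ = ∑ i : Fin (n + 1), (-t) ^ (i : ℕ) * N i 0 := det_updateCol_one_add_smul_cyclicShift t _
    _ = ((fun i : Fin (n + 1) => (-t) ^ (i : ℕ)) ᵥ* N) 0 := rfl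
    _ = 1 - (-t) ^ (n + 1) := by rw [pow_vecMul_one_add_smul_cyclicShift, Pi.single_eq_same]

lemma det_one_add_smul_one_add_smul_vecMulVec_mul_cyclicShift (t r : R) (v : Fin (n + 1) → R) :
    (1 + t • ((1 + r • vecMulVec v (Pi.single 0 1)) * cyclicShift R (n + 1))).det
      = 1 - (-t) ^ (n + 1) + r * (t * ∑ i : Fin (n + 1), (-t) ^ (i : ℕ) * v (finRotate _ i)) := by
  have shift_mul_comm :
      (1 + t • ((1 + r • vecMulVec v (Pi.single 0 1)) * cyclicShift R (n + 1))).det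
      = (1 + t • cyclicShift R (n + 1)
          + (r * t) • vecMulVec (v ∘ finRotate (n + 1)) (Pi.single 0 1)).det := by
    rw [← Matrix.mul_smul, det_one_add_mul_comm, Matrix.mul_add, Matrix.mul_one, Matrix.smul_mul,
      Matrix.mul_smul, mul_vecMulVec, permMatrix_mulVec, ← add_assoc, smul_comm, smul_smul]
  rw [shift_mul_comm, det_add_smul_vecMulVec_single, det_one_add_smul_cyclicShift,
    det_updateCol_one_add_smul_cyclicShift, mul_assoc]
  rfl

lemma mul_sum_neg_pow_mul_finRotate (t : R) (a : ℕ → R) :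
    t * ∑ i : Fin (n + 1), (-t) ^ (i : ℕ) * a (finRotate _ i)
      = -((∑ k ∈ Finset.Ico 1 (n + 1), (-1) ^ k * a k * t ^ k)
          + (-1) ^ (n + 1) * a 0 * t ^ (n + 1)) := by
  rw [Finset.mul_sum, Fin.sum_univ_castSucc, Finset.sum_Ico_eq_sum_range, Finset.sum_range,
    neg_add, ← Finset.sum_neg_distrib]
  congr 1
  · refine Finset.sum_congr rfl fun i _ => ?_
    simp only [coe_finRotate_of_ne_last (Fin.castSucc_lt_last i).ne, Fin.val_castSucc,
      add_comm 1 (i : ℕ), neg_pow t]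
    ring
  · simp only [finRotate_last, Fin.val_last, Fin.val_zero, neg_pow t]
    ring

end CyclicShift

section BlockTheta

variable {R S : Type*} [CommRing R] [CommRing S] {p n : ℕ}

/-- The `p × p` matrix with first column `a 0, …, a (p - 1)` and all other columns zero: the upper
left block of `Γ`. -/
def firstColumnMatrix (p : ℕ) [NeZero p] (a : ℕ → R) : Matrix (Fin p) (Fin p) R :=
  vecMulVec (fun i => a i) (Pi.single 0 1)

/-- The matrix `Θ = (Γ - 1) ω`, cut into `p × p` blocks. -/
def blockTheta (p : ℕ) [NeZero p] (a : ℕ → R) : Matrix (Fin p ⊕ Fin p) (Fin p ⊕ Fin p) R :=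
  (fromBlocks (firstColumnMatrix p a) (-firstColumnMatrix p a)
      (-firstColumnMatrix p a) (firstColumnMatrix p a) - 1)
    * fromBlocks (cyclicShift R p) 0 0 (cyclicShift R p)

lemma map_firstColumnMatrix [NeZero p] (f : R →+* S) (a : ℕ → R) :
    (firstColumnMatrix p a).map f = firstColumnMatrix p (f ∘ a) := by
  ext i j
  simp [firstColumnMatrix, vecMulVec_apply, Pi.single_apply, apply_ite f]

lemma map_blockTheta [NeZero p] (f : R →+* S) (a : ℕ → R) :
    (blockTheta p a).map f = blockTheta p (f ∘ a) := by
  simp [blockTheta, Matrix.map_mul, fromBlocks_map, Matrix.map_sub, Matrix.map_neg,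
    map_firstColumnMatrix]

lemma det_one_sub_smul_blockTheta (t : R) (a : ℕ → R) :
    (1 - t • blockTheta (n + 1) a).det
      = (1 - (-1) ^ (n + 1) * t ^ (n + 1)) ^ 2
        + 2 * (1 - (-1) ^ (n + 1) * t ^ (n + 1))
          * ((∑ k ∈ Finset.Ico 1 (n + 1), (-1) ^ k * a k * t ^ k)
            + (-1) ^ (n + 1) * a 0 * t ^ (n + 1)) := by
  rw [blockTheta, det_one_sub_smul_fromBlocks_mul, det_one_add_smul_cyclicShift, firstColumnMatrix,
    sub_eq_add_neg 1 ((2 : R) • _), ← neg_smul,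
    det_one_add_smul_one_add_smul_vecMulVec_mul_cyclicShift, mul_sum_neg_pow_mul_finRotate,
    neg_pow t]
  ring

/-- The identification of two copies of `Fin p` with the lower and the upper half of
`Fin (2 * p)`, along which `2p × 2p` matrices are cut into four `p × p` blocks. -/
def halvesEquiv (p : ℕ) : Fin p ⊕ Fin p ≃ Fin (2 * p) :=
  finSumFinEquiv.trans (finCongr (two_mul p).symm)

@[simp]
lemma coe_halvesEquiv_inl (i : Fin p) : (halvesEquiv p (Sum.inl i) : ℕ) = i := by
  simp [halvesEquiv]

@[simp]
lemma coe_halvesEquiv_inr (i : Fin p) : (halvesEquiv p (Sum.inr i) : ℕ) = p + i := by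
  simp [halvesEquiv, add_comm]

lemma finRotate_eq_iff {i j : Fin p} : finRotate p i = j ↔ (j : ℕ) = (i + 1) % p := by
  obtain _ | n := p
  · exact i.elim0
  · rw [finRotate_apply, Fin.ext_iff, Fin.val_add, Fin.val_one', Nat.add_mod_mod, eq_comm]

lemma submatrix_halvesEquiv_omega {ω : Matrix (Fin (2 * p)) (Fin (2 * p)) R}
    (hω : ∀ i j, ω i j =
      if ((i : ℕ) < p ∧ (j : ℕ) < p ∧ (j : ℕ) = ((i : ℕ) + 1) % p) ∨
         (p ≤ (i : ℕ) ∧ p ≤ (j : ℕ) ∧ (j : ℕ) - p = (((i : ℕ) - p) + 1) % p)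
      then 1 else 0) :
    ω.submatrix (halvesEquiv p) (halvesEquiv p)
      = fromBlocks (cyclicShift R p) 0 0 (cyclicShift R p) := by
  ext (i | i) (j | j) <;>
    simp [hω, PEquiv.toMatrix_apply, finRotate_eq_iff, i.is_lt.not_ge, j.is_lt.not_ge,
      -finRotate_apply]

lemma submatrix_halvesEquiv_gamma [NeZero p] {a : ℕ → R} {s : Fin (2 * p) → R}
    (hs : ∀ i, s i = if (i : ℕ) < p then a i else -a ((i : ℕ) - p))
    {Γ : Matrix (Fin (2 * p)) (Fin (2 * p)) R}
    (hΓ : ∀ i j, Γ i j = if (j : ℕ) = 0 then s i else if (j : ℕ) = p then -s i else 0) :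
    Γ.submatrix (halvesEquiv p) (halvesEquiv p)
      = fromBlocks (firstColumnMatrix p a) (-firstColumnMatrix p a)
          (-firstColumnMatrix p a) (firstColumnMatrix p a) := by
  ext (i | i) (j | j) <;>
    simp [firstColumnMatrix, hΓ, hs, vecMulVec_apply, Pi.single_apply, NeZero.ne, j.is_lt.ne,
      neg_ite]

end BlockTheta

theorem det_one_sub_smul_theta_general {R : Type*} [CommRing R] (p : ℕ) (hp : 0 < p) (a : ℕ → R)
    (s : Fin (2 * p) → R)
    (hs : ∀ i, s i = if (i : ℕ) < p then a i else -a ((i : ℕ) - p))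
    (ω : Matrix (Fin (2 * p)) (Fin (2 * p)) R)
    (hω : ∀ i j, ω i j =
      if ((i : ℕ) < p ∧ (j : ℕ) < p ∧ (j : ℕ) = ((i : ℕ) + 1) % p) ∨
         (p ≤ (i : ℕ) ∧ p ≤ (j : ℕ) ∧ (j : ℕ) - p = (((i : ℕ) - p) + 1) % p)
      then 1 else 0)
    (Γ : Matrix (Fin (2 * p)) (Fin (2 * p)) R)
    (hΓ : ∀ i j, Γ i j = if (j : ℕ) = 0 then s i else if (j : ℕ) = p then -s i else 0)
    (Θ : Matrix (Fin (2 * p)) (Fin (2 * p)) R) (hΘ : Θ = (Γ - 1) * ω) :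
    Matrix.det ((1 : Matrix (Fin (2 * p)) (Fin (2 * p)) R[X]) - (X : R[X]) • Θ.map C)
      = (1 - (-1) ^ p * X ^ p) ^ 2
        + 2 * (1 - (-1) ^ p * X ^ p)
          * ((∑ k ∈ Finset.Ico 1 p, C ((-1) ^ k * a k) * X ^ k)
            + C ((-1) ^ p * a 0) * X ^ p) := by
  obtain ⟨n, rfl⟩ := Nat.exists_eq_add_one.2 hp
  let e := halvesEquiv (n + 1)
  have theta_submatrix : Θ.submatrix e e = blockTheta (n + 1) a :=
    calc Θ.submatrix e e
        = (Γ.submatrix e e - 1) * ω.submatrix e e := by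
          rw [hΘ, ← submatrix_mul_equiv _ _ e e e, ← submatrix_one_equiv e]
          rfl
      _ = blockTheta (n + 1) a := by
          rw [submatrix_halvesEquiv_gamma hs hΓ, submatrix_halvesEquiv_omega hω, blockTheta]
  calc (1 - (X : R[X]) • Θ.map C).det
      = (1 - (X : R[X]) • blockTheta (n + 1) (C ∘ a)).det := by
        rw [← map_blockTheta, ← theta_submatrix, ← det_submatrix_equiv_self e,
          ← submatrix_one_equiv e]
        rfl
    _ = _ := by
        simp only [det_one_sub_smul_blockTheta, Function.comp_apply, map_mul, map_pow, map_neg,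
          map_one]

/-- The characteristic-type polynomial `det (I - t Θ)` of the matrix `Θ = (Γ - I) ω`
built from the Φ-values `a 0, …, a (p-1)` of a `p`-periodic kneading sequence equals
`(1 - (-1)^p t^p)^2 + 2 (1 - (-1)^p t^p) u_p(t)`, i.e.
`(1 - (-1)^p t^p)^2 (1+t) D(t)` where `D` is the kneading determinant. -/
theorem det_one_sub_smul_theta (p : ℕ) (hp : 2 ≤ p) (a : ℕ → ℤ)
    (ha : ∀ k < p, a k = -1 ∨ a k = 0 ∨ a k = 1) (ha0 : a 0 = 1)
    (s : Fin (2 * p) → ℤ)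
    (hs : ∀ i, s i = if (i : ℕ) < p then a i else -a ((i : ℕ) - p))
    (ω : Matrix (Fin (2 * p)) (Fin (2 * p)) ℤ)
    (hω : ∀ i j, ω i j =
      if ((i : ℕ) < p ∧ (j : ℕ) < p ∧ (j : ℕ) = ((i : ℕ) + 1) % p) ∨
         (p ≤ (i : ℕ) ∧ p ≤ (j : ℕ) ∧ (j : ℕ) - p = (((i : ℕ) - p) + 1) % p)
      then 1 else 0)
    (Γ : Matrix (Fin (2 * p)) (Fin (2 * p)) ℤ)
    (hΓ : ∀ i j, Γ i j = if (j : ℕ) = 0 then s i else if (j : ℕ) = p then -s i else 0)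
    (Θ : Matrix (Fin (2 * p)) (Fin (2 * p)) ℤ) (hΘ : Θ = (Γ - 1) * ω) :
    Matrix.det ((1 : Matrix (Fin (2 * p)) (Fin (2 * p)) ℤ[X]) - (X : ℤ[X]) • Θ.map C)
      = (1 - (-1) ^ p * X ^ p) ^ 2
        + 2 * (1 - (-1) ^ p * X ^ p)
          * ((∑ k ∈ Finset.Ico 1 p, C ((-1) ^ k * a k) * X ^ k) + C ((-1 : ℤ) ^ p) * X ^ p) := by
  simpa only [ha0, mul_one] using
    det_one_sub_smul_theta_general p (by omega) a s hs ω hω Γ hΓ Θ hΘ
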